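/- A finite group G has the strong CFS property if and only if G is (isomorphic to) one of the following: the trivial group, a cyclic group of prime order, C2 × C2, C4, C2 × C2 × C2, or C3 × C3. -/

import Mathlib

/-- `G = A · B`: every element of `G` can be written in exactly one way as `a * b`
with `a ∈ A` and `b ∈ B`. -/
def IsDirectProd {G : Type*} [Group G] (A B : Set G) : Prop :=
  ∀ g : G, ∃! p : G × G, p.1 ∈ A ∧ p.2 ∈ B ∧ p.1 * p.2 = g

/-- `A` is a left factor of `G`: there is `B ⊆ G` with `G = A · B`. -/
def IsLeftFactor {G : Type*} [Group G] (A : Set G) : Prop :=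
  ∃ B : Set G, IsDirectProd A B

/-- `A` is a right factor of `G`: there is `B ⊆ G` with `G = B · A`. -/
def IsRightFactor {G : Type*} [Group G] (A : Set G) : Prop :=
  ∃ B : Set G, IsDirectProd B A

/-- `A` is a factor of `G`: it is a left factor or a right factor of `G`. -/
def IsFactor {G : Type*} [Group G] (A : Set G) : Prop :=
  IsLeftFactor A ∨ IsRightFactor A

/-- A group `G` has the strong CFS property if every Lagrange subset of `G`
(i.e. every subset whose cardinality divides `|G|`) is a factor of `G`. -/
def HasStrongCFS (G : Type*) [Group G] : Prop :=
  ∀ A : Set G, Nat.card A ∣ Nat.card G → IsFactor A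

open Pointwise

theorem ncard_pair_le_two {G : Type*} (a b : G) : ({a, b} : Set G).ncard ≤ 2 := by
  have := Set.ncard_insert_le a {b}
  simpa using this


theorem IsDirectProd.surj {G : Type*} [Group G] {A B : Set G} (h : IsDirectProd A B) (g : G) :
    ∃ a ∈ A, ∃ b ∈ B, a * b = g := by
  obtain ⟨⟨a, b⟩, ⟨h1, h2, h3⟩, -⟩ := h g
  exact ⟨a, h1, b, h2, h3⟩

theorem IsDirectProd.inj {G : Type*} [Group G] {A B : Set G} (h : IsDirectProd A B)
    {a a' b b' : G} (ha : a ∈ A) (ha' : a' ∈ A) (hb : b ∈ B) (hb' : b' ∈ B)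
    (hab : a * b = a' * b') : a = a' ∧ b = b' := by
  have := (h (a * b)).unique (y₁ := (a, b)) (y₂ := (a', b')) ⟨ha, hb, rfl⟩ ⟨ha', hb', hab.symm⟩
  simpa using this

theorem isDirectProd_iff {G : Type*} [Group G] {A B : Set G} :
    IsDirectProd A B ↔ Function.Bijective (fun p : A × B => (p.1 : G) * p.2) := by
  constructor
  · intro h
    constructor
    · rintro ⟨⟨a, ha⟩, ⟨b, hb⟩⟩ ⟨⟨a', ha'⟩, ⟨b', hb'⟩⟩ hab
      have := h.inj ha ha' hb hb' hab
      simpa using this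
    · intro g
      obtain ⟨a, ha, b, hb, hab⟩ := h.surj g
      exact ⟨(⟨a, ha⟩, ⟨b, hb⟩), hab⟩
  · intro h g
    obtain ⟨⟨⟨a, ha⟩, ⟨b, hb⟩⟩, hab⟩ := h.2 g
    refine ⟨(a, b), ⟨ha, hb, hab⟩, ?_⟩
    rintro ⟨a', b'⟩ ⟨ha', hb', hab'⟩
    have := @h.1 (⟨a', ha'⟩, ⟨b', hb'⟩) (⟨a, ha⟩, ⟨b, hb⟩) (hab'.trans hab.symm)
    simpa using this

theorem IsDirectProd.card {G : Type*} [Group G] {A B : Set G} (h : IsDirectProd A B) :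
    Nat.card A * Nat.card B = Nat.card G := by
  rw [← Nat.card_prod]
  exact Nat.card_eq_of_bijective _ (isDirectProd_iff.1 h)

theorem IsDirectProd.inv {G : Type*} [Group G] {A B : Set G} (h : IsDirectProd B A) :
    IsDirectProd A⁻¹ B⁻¹ := by
  intro g
  obtain ⟨b, hb, a, ha, hab⟩ := h.surj g⁻¹
  refine ⟨(a⁻¹, b⁻¹), ⟨by simpa, by simpa, by simp [← mul_inv_rev, hab]⟩, ?_⟩
  rintro ⟨a', b'⟩ ⟨ha', hb', hab'⟩
  have := h.inj hb hb' ha ha' (by rw [hab, ← hab']; simp)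
  simp [this.1, this.2]

theorem IsFactor.cases {G : Type*} [Group G] {A : Set G} (h : IsFactor A) :
    IsLeftFactor A ∨ IsLeftFactor A⁻¹ := by
  rcases h with h | ⟨B, hB⟩
  · exact .inl h
  · exact .inr ⟨_, hB.inv⟩

theorem left_dvd {G : Type*} [Group G] [Finite G] (H : Subgroup G) (A : Set G) (hA : A ⊆ H)
    (h : IsLeftFactor A) : Nat.card A ∣ Nat.card H := by
  obtain ⟨B, hB⟩ := h
  have key : IsDirectProd (G := H) (Subtype.val ⁻¹' A) (Subtype.val ⁻¹' B) := by
    intro g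
    obtain ⟨a, ha, b, hb, hab⟩ := hB.surj g
    have haH := hA ha
    have hbH : b ∈ H := by
      have : b = a⁻¹ * g := by rw [← hab]; simp
      rw [this]; exact H.mul_mem (H.inv_mem haH) g.2
    refine ⟨(⟨a, haH⟩, ⟨b, hbH⟩), ⟨ha, hb, Subtype.ext hab⟩, ?_⟩
    rintro ⟨⟨a', haH'⟩, ⟨b', hbH'⟩⟩ ⟨ha', hb', hab'⟩
    have := hB.inj ha ha' hb hb' (by rw [hab, ← hab']; rfl)
    simp [this.1, this.2]
  have h1 := key.card
  have h2 : Nat.card (Subtype.val ⁻¹' A : Set H) = Nat.card A := by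
    apply Nat.card_preimage_of_injOn Subtype.val_injective.injOn
    simpa using hA
  rw [h2] at h1
  exact ⟨_, h1.symm⟩

theorem cfs_dvd {G : Type*} [Group G] [Finite G] (hG : HasStrongCFS G) (H : Subgroup G) (k : ℕ)
    (hk : k ∣ Nat.card G) (hkH : k ≤ Nat.card H) : k ∣ Nat.card H := by
  have : k ≤ (H : Set G).ncard := hkH
  obtain ⟨A, hA, hAk⟩ := Set.exists_subset_card_eq this
  have hc : Nat.card A = k := hAk
  rcases (hG A (by rwa [hc])).cases with h | h
  · rw [← hc]; exact left_dvd H A hA h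
  · have := left_dvd H A⁻¹ (by intro a ha; have := hA ha; simpa using this) h
    rwa [Set.natCard_inv, hc] at this

theorem left_one {G : Type*} [Group G] [Finite G] (H : Subgroup G) (h3 : 3 ≤ Nat.card H) (g : G)
    (h : IsLeftFactor ((H : Set G) \ {1} ∪ {g})) (k : ℕ) (hk : g ^ k ∈ H) : g ^ k = 1 := by
  obtain ⟨B, hB⟩ := h
  have key : ∀ b ∈ B, ∀ c ∈ H, c * b ∈ B → c = 1 := by
    intro b hb c hc hcb
    by_contra hne
    obtain ⟨a, haH, ha⟩ : ∃ a ∈ (H : Set G), a ∉ ({1, c} : Set G) := by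
      refine Set.exists_mem_notMem_of_ncard_lt_ncard ?_ (Set.toFinite _)
      have : ({1, c} : Set G).ncard ≤ 2 := ncard_pair_le_two _ _
      have : 3 ≤ (H : Set G).ncard := h3
      omega
    simp only [Set.mem_insert_iff, Set.mem_singleton_iff, not_or] at ha
    have := hB.inj (a := a) (a' := a * c⁻¹) (b := b) (b' := c * b)
      (.inl ⟨haH, by simpa using ha.1⟩)
      (.inl ⟨H.mul_mem haH (H.inv_mem hc), by simpa [mul_inv_eq_one] using ha.2⟩) hb hcb (by group)
    exact hne (by simpa using this.1)
  have step : ∀ b ∈ B, g⁻¹ * b ∈ B := by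
    intro b hb
    obtain ⟨a, ha, b', hb', hab⟩ := hB.surj b
    rcases ha with ⟨haH, ha⟩ | ha
    · exact absurd (key b' hb' a haH (by rwa [hab])) ha
    · rw [Set.mem_singleton_iff] at ha
      subst ha
      rw [← hab]; simpa
  have step' : ∀ k : ℕ, ∀ b ∈ B, (g ^ k)⁻¹ * b ∈ B := by
    intro k
    induction k with
    | zero => intro b hb; simpa
    | succ k ih =>
      intro b hb
      rw [pow_succ, mul_inv_rev, mul_assoc]
      exact step _ (ih b hb)
  obtain ⟨_, _, b, hb, _⟩ := hB.surj 1
  have := key b hb _ (H.inv_mem hk) (step' k b hb)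
  simpa using this

theorem card_mod_one {G : Type*} [Group G] [Finite G] (H : Subgroup G) (g : G) (hg : g ∉ H) :
    Nat.card ((H : Set G) \ {1} ∪ {g} : Set G) = Nat.card H := by
  change Set.ncard _ = Set.ncard (H : Set G)
  rw [Set.union_singleton, Set.ncard_exchange (a := g) (b := 1)] <;> simp [hg, H.one_mem]

theorem cfs_one {G : Type*} [Group G] [Finite G] (hG : HasStrongCFS G) (H : Subgroup G)
    (h3 : 3 ≤ Nat.card H) (g : G) (hg : g ∉ H) (k : ℕ) (hk : g ^ k ∈ H) : g ^ k = 1 := by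
  rcases (hG ((H : Set G) \ {1} ∪ {g})
    (by rw [card_mod_one H g hg]; exact H.card_subgroup_dvd_card)).cases with h | h
  · exact left_one H h3 g h k hk
  · have : ((H : Set G) \ {1} ∪ {g})⁻¹ = (H : Set G) \ {1} ∪ {g⁻¹} := by
      ext a; simp [inv_eq_iff_eq_inv]
    rw [this] at h
    have := left_one H h3 g⁻¹ h k (by simpa using hk)
    simpa using this

theorem left_two {G : Type*} [Group G] [Finite G] (H : Subgroup G) [H.Normal]
    (h5 : 5 ≤ Nat.card H) (x u y : G) (hx : x ∈ H) (hu : u ∈ H) (hx1 : x ≠ 1) (hux : u ≠ x)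
    (hxu : x * u ≠ 1)
    (h : IsLeftFactor ((H : Set G) \ {1, x} ∪ {y, u * y})) : False := by
  obtain ⟨B, hB⟩ := h
  have key : ∀ b ∈ B, ∀ c ∈ H, c * b ∈ B → c = 1 := by
    intro b hb c hc hcb
    by_contra hne
    obtain ⟨a, haH, ha⟩ : ∃ a ∈ (H : Set G), a ∉ ({1, x, c, x * c} : Set G) := by
      refine Set.exists_mem_notMem_of_ncard_lt_ncard ?_ (Set.toFinite _)
      have : ({1, x, c, x * c} : Set G).ncard ≤ 4 := by
        have h1 := Set.ncard_insert_le 1 {x, c, x * c}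
        have h2 := Set.ncard_insert_le x {c, x * c}
        have h3 := ncard_pair_le_two c (x * c)
        omega
      have : 5 ≤ (H : Set G).ncard := h5
      omega
    simp only [Set.mem_insert_iff, Set.mem_singleton_iff, not_or] at ha
    have := hB.inj (a := a) (a' := a * c⁻¹) (b := b) (b' := c * b)
      (.inl ⟨haH, by simpa using ⟨ha.1, ha.2.1⟩⟩)
      (.inl ⟨H.mul_mem haH (H.inv_mem hc), by
        simp only [Set.mem_insert_iff, Set.mem_singleton_iff, not_or, mul_inv_eq_iff_eq_mul,
          one_mul]
        exact ⟨ha.2.2.1, ha.2.2.2⟩⟩) hb hcb (by group)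
    exact hne (by simpa using this.1)
  have key2 : ∀ b ∈ B, ∀ b' ∈ B, ∀ c ∈ H, c * y * b = y * b' → c = 1 := by
    intro b hb b' hb' c hc e
    have h1 : b' = (y⁻¹ * c * y) * b := by rw [mul_assoc, mul_assoc, ← mul_assoc c, e]; simp
    have h2 : y⁻¹ * c * y ∈ H := by
      simpa using Subgroup.Normal.conj_mem ‹H.Normal› c hc y⁻¹
    have h3 := key b hb _ h2 (h1 ▸ hb')
    have : c = y * (y⁻¹ * c * y) * y⁻¹ := by group
    rw [this, h3]; simp
  obtain ⟨_, _, b, hb, _⟩ := hB.surj 1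
  have c1 : ∃ b' ∈ B, b = y * b' ∨ b = u * y * b' := by
    obtain ⟨a, ha, b', hb', hab⟩ := hB.surj b
    rcases ha with ⟨haH, ha⟩ | ha
    · exact absurd (by simp [key b' hb' a haH (by rwa [hab])]) ha
    · rcases ha with rfl | rfl
      · exact ⟨b', hb', .inl hab.symm⟩
      · exact ⟨b', hb', .inr hab.symm⟩
  have c2 : ∃ b' ∈ B, x * b = y * b' ∨ x * b = u * y * b' := by
    obtain ⟨a, ha, b', hb', hab⟩ := hB.surj (x * b)
    rcases ha with ⟨haH, ha⟩ | ha
    · have h1 : x⁻¹ * a * b' = b := by rw [mul_assoc, hab]; simp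
      have h2 := key b' hb' (x⁻¹ * a) (H.mul_mem (H.inv_mem hx) haH) (by rwa [h1])
      exact absurd (by simp [← inv_mul_eq_one.1 h2]) ha
    · rcases ha with rfl | rfl
      · exact ⟨b', hb', .inl hab.symm⟩
      · exact ⟨b', hb', .inr hab.symm⟩
  obtain ⟨b', hb', h1⟩ := c1
  obtain ⟨b'', hb'', h2⟩ := c2
  rcases h1 with h1 | h1 <;> rcases h2 with h2 | h2
  · exact hx1 (key2 b' hb' b'' hb'' x hx (by rw [← h2, h1]; group))
  · have := key2 b' hb' b'' hb'' (u⁻¹ * x) (H.mul_mem (H.inv_mem hu) hx)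
      (by rw [mul_assoc, mul_assoc, ← h1, h2]; group)
    exact hux (inv_mul_eq_one.1 this)
  · exact hxu (key2 b' hb' b'' hb'' (x * u) (H.mul_mem hx hu) (by rw [← h2, h1]; group))
  · have := key2 b' hb' b'' hb'' (u⁻¹ * x * u) (H.mul_mem (H.mul_mem (H.inv_mem hu) hx) hu)
      (by
        have : u⁻¹ * x * u * y * b' = u⁻¹ * (x * b) := by rw [h1]; group
        rw [this, h2]; group)
    apply hx1
    have h' : x = u * (u⁻¹ * x * u) * u⁻¹ := by group
    rw [h', this]; simp

theorem cfs_two {G : Type*} [Group G] [Finite G] (hG : HasStrongCFS G) (H : Subgroup G) [H.Normal]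
    (h5 : 5 ≤ Nat.card H) (x : G) (hx : x ∈ H) (hx1 : x ≠ 1) (hxc : x ∈ Subgroup.center G) :
    H = ⊤ := by
  by_contra hH
  obtain ⟨y, hy⟩ : ∃ y, y ∉ H := by
    by_contra! hc
    exact hH ((Subgroup.eq_top_iff' H).2 hc)
  obtain ⟨u, huH, hu⟩ : ∃ a ∈ (H : Set G), a ∉ ({1, x, x⁻¹} : Set G) := by
    refine Set.exists_mem_notMem_of_ncard_lt_ncard ?_ (Set.toFinite _)
    have : ({1, x, x⁻¹} : Set G).ncard ≤ 3 := by
      have h2 := Set.ncard_insert_le 1 {x, x⁻¹}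
      have h3 := ncard_pair_le_two x x⁻¹
      omega
    have : 5 ≤ (H : Set G).ncard := h5
    omega
  simp only [Set.mem_insert_iff, Set.mem_singleton_iff, not_or] at hu
  obtain ⟨hu1, hu2, hu3⟩ := hu
  have huy : u * y ∉ H := by
    intro h; exact hy ((H.mul_mem_cancel_left huH).1 h)
  have hcard : Nat.card ((H : Set G) \ {1, x} ∪ {y, u * y} : Set G) = Nat.card H := by
    change Set.ncard _ = Set.ncard (H : Set G)
    rw [Set.ncard_union_eq]
    · rw [Set.ncard_sdiff (by simp [Set.insert_subset_iff, hx, H.one_mem]), Set.ncard_pair hx1.symm, Set.ncard_pair]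
      · have : 5 ≤ (H : Set G).ncard := h5
        omega
      · simpa using hu1
    · rw [Set.disjoint_left]
      rintro a ⟨ha, -⟩ (rfl | rfl)
      · exact hy ha
      · exact huy ha
  rcases (hG _ (by rw [hcard]; exact H.card_subgroup_dvd_card)).cases with h | h
  · refine left_two H h5 x u y hx huH hx1 hu2 ?_ h
    intro h; exact hu3 (mul_eq_one_iff_inv_eq.1 h).symm
  · have conj : y⁻¹ * x * y = x := by
      rw [mul_assoc, ← Subgroup.mem_center_iff.1 hxc y]; simp
    have e : ((H : Set G) \ {1, x} ∪ {y, u * y})⁻¹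
        = (H : Set G) \ {1, x⁻¹} ∪ {y⁻¹, (y⁻¹ * u⁻¹ * y) * y⁻¹} := by
      ext a; simp [inv_eq_iff_eq_inv]
    rw [e] at h
    refine left_two H h5 x⁻¹ _ y⁻¹ (H.inv_mem hx) ?_ (by simpa) ?_ ?_ h
    · simpa using Subgroup.Normal.conj_mem ‹H.Normal› _ (H.inv_mem huH) y⁻¹
    · intro h
      apply hu2
      have : u = y * (y⁻¹ * u⁻¹ * y)⁻¹ * y⁻¹ := by group
      rw [this, h, inv_inv, Subgroup.mem_center_iff.1 hxc y]; group
    · intro h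
      apply hu3
      have h2 : (y⁻¹ * u⁻¹ * y) = x := by rwa [inv_mul_eq_one, eq_comm] at h
      have : u = y * (y⁻¹ * u⁻¹ * y)⁻¹ * y⁻¹ := by group
      rw [this, h2]
      nth_rw 1 [← conj]; group

theorem iso_of_exponent {G : Type*} [CommGroup G] [Finite G] (p : ℕ) [Fact p.Prime] (V : Type)
    [AddCommGroup V] [Module (ZMod p) V] [Finite V] (hcard : Nat.card G = Nat.card V)
    (hexp : ∀ g : G, g ^ p = 1) : Nonempty (G ≃* Multiplicative V) := by
  let : Module (ZMod p) (Additive G) := AddCommGroup.zmodModule (n := p) (fun x => hexp x)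
  have h1 := Module.natCard_eq_pow_finrank (K := ZMod p) (V := Additive G)
  have h2 := Module.natCard_eq_pow_finrank (K := ZMod p) (V := V)
  have h3 : Nat.card (Additive G) = Nat.card V := hcard
  rw [h1, h2, Nat.card_zmod] at h3
  have h4 := Nat.pow_right_injective (Fact.out : p.Prime).two_le h3
  exact ⟨AddEquiv.toMultiplicativeRight.symm.symm (LinearEquiv.ofFinrankEq (Additive G) V h4).toAddEquiv⟩

theorem exists_central {G : Type*} [Group G] [Finite G] (p : ℕ) [Fact p.Prime] (hG : IsPGroup p G)
    (H : Subgroup G) [H.Normal] (hH : p ∣ Nat.card H) :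
    ∃ x ∈ H, x ≠ 1 ∧ x ∈ Subgroup.center G := by
  have hG' : IsPGroup p (ConjAct G) := hG.of_equiv ConjAct.toConjAct
  obtain ⟨b, hb, hne⟩ := hG'.exists_fixed_point_of_prime_dvd_card_of_fixed_point H hH (a := 1)
    (by intro g; exact smul_one g)
  refine ⟨b, b.2, fun h => hne (Subtype.ext h.symm), ?_⟩
  rw [Subgroup.mem_center_iff]
  intro g
  have := congrArg Subtype.val (hb (ConjAct.toConjAct g))
  rw [ConjAct.Subgroup.val_conj_smul, ConjAct.toConjAct_smul] at this
  rw [mul_inv_eq_iff_eq_mul] at this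
  exact this

theorem cfs_card {G : Type*} [Group G] [Finite G] (hG : HasStrongCFS G) :
    Nat.card G = 1 ∨ (Nat.card G).Prime ∨ Nat.card G = 4 ∨ Nat.card G = 8 ∨ Nat.card G = 9 := by
  by_cases h1 : Nat.card G = 1
  · exact .inl h1
  right
  set p := (Nat.card G).minFac with hpdef
  have hp : p.Prime := Nat.minFac_prime h1
  have : Fact p.Prime := ⟨hp⟩
  obtain ⟨a, ha⟩ : ∃ a, Nat.card G = p ^ a := by
    refine ⟨_, Nat.eq_prime_pow_of_unique_prime_dvd Nat.card_pos.ne' ?_⟩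
    intro q hq hqd
    have : Fact q.Prime := ⟨hq⟩
    obtain ⟨x, hx⟩ := exists_prime_orderOf_dvd_card' q hqd
    have hle : p ≤ q := Nat.minFac_le_of_dvd hq.two_le hqd
    have := cfs_dvd hG (Subgroup.zpowers x) p (Nat.minFac_dvd _) (by rwa [Nat.card_zpowers, hx])
    rw [Nat.card_zpowers, hx] at this
    exact ((Nat.prime_dvd_prime_iff_eq hp hq).1 this).symm
  obtain _ | _ | a := a
  · exact absurd ha h1
  · left; rw [ha]; simpa using hp
  right
  obtain ⟨H, hH⟩ := Sylow.exists_subgroup_card_pow_prime (G := G) p (n := a + 1)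
    (by rw [ha]; exact pow_dvd_pow p (Nat.le_succ _))
  have hidx : H.index = p := by
    have := H.card_mul_index
    rw [ha, hH, pow_succ p (a + 1)] at this
    exact Nat.eq_of_mul_eq_mul_left (pow_pos hp.pos _) this
  have : H.Normal := Subgroup.normal_of_index_eq_minFac_card hidx
  have hlt : p ^ (a + 1) < 5 := by
    by_contra! h5
    obtain ⟨x, hx, hx1, hxc⟩ := exists_central p (IsPGroup.of_card ha) H
      (by rw [hH]; exact dvd_pow_self p (by simp))
    have := cfs_two hG H (by rwa [hH]) x hx hx1 hxc
    rw [this, Subgroup.index_top] at hidx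
    exact hp.one_lt.ne hidx
  have hp5 : p < 5 := lt_of_le_of_lt (Nat.le_self_pow (by simp) p) hlt
  have ha2 : a < 2 := by
    by_contra! h
    have h8 : 2 ^ 3 ≤ p ^ (a + 1) :=
      (Nat.pow_le_pow_left hp.two_le 3).trans (Nat.pow_le_pow_right hp.pos (by omega))
    omega
  rw [ha]
  clear_value p
  clear ha hidx hH hpdef
  interval_cases p <;> interval_cases a <;> simp_all
  all_goals revert hp; decide

theorem cfs_forward {G : Type*} [Group G] [Finite G] (hG : HasStrongCFS G) :
      (Nat.card G = 1 ∨
       (IsCyclic G ∧ (Nat.card G).Prime) ∨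
       Nonempty (G ≃* Multiplicative (ZMod 2 × ZMod 2)) ∨
       Nonempty (G ≃* Multiplicative (ZMod 4)) ∨
       Nonempty (G ≃* Multiplicative (ZMod 2 × ZMod 2 × ZMod 2)) ∨
       Nonempty (G ≃* Multiplicative (ZMod 3 × ZMod 3))) := by
  rcases cfs_card hG with h | h | h | h | h
  · exact .inl h
  · have : Fact (Nat.card G).Prime := ⟨h⟩
    exact .inr (.inl ⟨isCyclic_of_prime_card rfl, h⟩)
  · right; right
    by_cases hc : IsCyclic G
    · right; left
      exact ⟨mulEquivOfCyclicCardEq (by rw [h]; simp)⟩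
    · left
      have : Fact (Nat.Prime 2) := ⟨Nat.prime_two⟩
      let := IsPGroup.commGroupOfCardEqPrimeSq (p := 2) (G := G) h
      apply iso_of_exponent 2 _ (by rw [h]; simp)
      intro g
      have hd := orderOf_dvd_natCard g
      rw [h, show 4 = 2 ^ 2 by rfl, Nat.dvd_prime_pow Nat.prime_two] at hd
      obtain ⟨k, hk, hd⟩ := hd
      have : k ≠ 2 := by
        rintro rfl
        exact hc (isCyclic_of_orderOf_eq_card g (by rw [hd, h]; rfl))
      apply orderOf_dvd_iff_pow_eq_one.1
      rw [hd]
      exact (pow_dvd_pow 2 (by omega : k ≤ 1))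
  · right; right; right; right; left
    have : Fact (Nat.Prime 2) := ⟨Nat.prime_two⟩
    have hexp : ∀ g : G, g ^ 2 = 1 := by
      intro g
      by_contra hg
      have hd := orderOf_dvd_natCard g
      rw [h, show 8 = 2 ^ 3 by rfl, Nat.dvd_prime_pow Nat.prime_two] at hd
      obtain ⟨k, hk, hd⟩ := hd
      have hk2 : 2 ≤ k := by
        by_contra! hk2
        apply hg
        apply orderOf_dvd_iff_pow_eq_one.1
        rw [hd]
        exact (pow_dvd_pow 2 (by omega : k ≤ 1))
      have hk3 : k ≠ 3 := by
        rintro rfl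
        have h4 : orderOf (g ^ 2) = 4 := by
          rw [orderOf_pow, hd]; rfl
        have := cfs_one hG (Subgroup.zpowers (g ^ 2)) (by rw [Nat.card_zpowers, h4]; norm_num) g
          (by
            intro hm
            have := Subgroup.orderOf_dvd_natCard _ hm
            rw [Nat.card_zpowers, h4, hd] at this
            revert this; decide) 2 (Subgroup.mem_zpowers _)
        exact hg this
      obtain rfl : k = 2 := by omega
      have hd4 : orderOf g = 4 := hd
      have hc4 : Nat.card (Subgroup.zpowers g) = 4 := by rw [Nat.card_zpowers, hd4]
      have hidx : (Subgroup.zpowers g).index = 2 := by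
        have := (Subgroup.zpowers g).card_mul_index
        rw [hc4, h] at this
        omega
      obtain ⟨y, hy⟩ : ∃ y, y ∉ Subgroup.zpowers g := by
        by_contra! hc
        rw [(Subgroup.eq_top_iff' _).2 hc] at hidx
        simp at hidx
      have hout : ∀ y, y ∉ Subgroup.zpowers g → y ^ 2 = 1 := fun y hy =>
        cfs_one hG (Subgroup.zpowers g) (by rw [hc4]; norm_num) y hy 2
          (Subgroup.sq_mem_of_index_two hidx y)
      have hy2 := hout y hy
      have hgy2 := hout (g * y) (by
        intro hm
        exact hy ((Subgroup.mul_mem_cancel_left _ (Subgroup.mem_zpowers g)).1 hm))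
      have hg4 : g ^ 4 = 1 := by rw [← hd4]; exact pow_orderOf_eq_one g
      have hyy : y * y = 1 := by rw [← sq]; exact hy2
      have hgygy : g * y * (g * y) = 1 := by rw [← sq]; exact hgy2
      have hz : g ^ 2 * g ^ 2 = 1 := by rw [← pow_add]; exact hg4
      have hyi : y⁻¹ = y := inv_eq_of_mul_eq_one_left hyy
      have hygi : y * g * y = g⁻¹ := by
        apply eq_inv_of_mul_eq_one_right
        simpa [mul_assoc] using hgygy
      have hcomm : Commute (g ^ 2) y := by
        have : y * g ^ 2 * y = (g ^ 2)⁻¹ := by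
          have : y * g ^ 2 * y = (y * g * y) * (y * g * y) := by
            simp only [sq, mul_assoc]
            rw [← mul_assoc y y, hyy, one_mul]
          rw [this, hygi]; group
        rw [inv_eq_of_mul_eq_one_left hz] at this
        change g ^ 2 * y = y * g ^ 2
        rw [← this, mul_assoc (y * g ^ 2), hyy, mul_one, this]
      -- the Klein four subgroup
      have hzmem : g ^ 2 ∈ Subgroup.zpowers g := Subgroup.pow_mem _ (Subgroup.mem_zpowers g) 2
      have hne : g ^ 2 ≠ y := fun e => hy (e ▸ hzmem)
      set K : Subgroup G := Subgroup.closure {g ^ 2, y} with hK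
      have hzK : g ^ 2 ∈ K := Subgroup.subset_closure (by simp)
      have hyK : y ∈ K := Subgroup.subset_closure (by simp)
      have hKy : ∀ k ∈ K, Commute y k := by
        intro k hk
        have : K ≤ Subgroup.centralizer {y} := by
          rw [hK, Subgroup.closure_le]
          rintro a (rfl | rfl)
          · simpa [Subgroup.mem_centralizer_iff] using hcomm.symm.eq
          · simp [Subgroup.mem_centralizer_iff]
        have := this hk
        rw [Subgroup.mem_centralizer_iff] at this
        exact this y rfl
      have hgK : g ∉ K := by
        intro hm
        have h1 := (hKy g hm).eq
        rw [h1, mul_assoc, hyy, mul_one] at hygi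
        apply hg
        rw [sq]
        nth_rw 1 [hygi]
        simp
      have hK3 : 3 ≤ Nat.card K := by
        have hsub : ({1, g ^ 2, y} : Set G) ⊆ K := by
          rintro a (rfl | rfl | rfl)
          · exact K.one_mem
          · exact hzK
          · exact hyK
        have h1 := Set.ncard_le_ncard hsub
        have hy1 : y ≠ 1 := fun e => hy (e ▸ Subgroup.one_mem _)
        rw [Set.ncard_eq_three.2 ⟨1, g ^ 2, y, Ne.symm hg, hy1.symm, hne, rfl⟩] at h1
        exact h1
      exact hg (cfs_one hG K hK3 g hgK 2 hzK)
    let : CommGroup G := { (inferInstance : Group G) with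
      mul_comm := by
        intro a b
        have hi : ∀ a : G, a⁻¹ = a := fun a => inv_eq_of_mul_eq_one_left (by rw [← sq]; exact hexp a)
        rw [← hi (a * b), mul_inv_rev, hi, hi] }
    exact iso_of_exponent 2 _ (by rw [h]; simp) hexp
  · right; right; right; right; right
    have : Fact (Nat.Prime 3) := ⟨Nat.prime_three⟩
    have hexp : ∀ g : G, g ^ 3 = 1 := by
      intro g
      by_contra hg
      have hd := orderOf_dvd_natCard g
      rw [h, show 9 = 3 ^ 2 by rfl, Nat.dvd_prime_pow Nat.prime_three] at hd
      obtain ⟨k, hk, hd⟩ := hd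
      have hk2 : 2 ≤ k := by
        by_contra! hk2
        apply hg
        apply orderOf_dvd_iff_pow_eq_one.1
        rw [hd]
        exact (pow_dvd_pow 3 (by omega : k ≤ 1))
      obtain rfl : k = 2 := by omega
      have h4 : orderOf (g ^ 3) = 3 := by
        rw [orderOf_pow, hd]; rfl
      have := cfs_one hG (Subgroup.zpowers (g ^ 3)) (by rw [Nat.card_zpowers, h4]) g
          (by
            intro hm
            have := Subgroup.orderOf_dvd_natCard _ hm
            rw [Nat.card_zpowers, h4, hd] at this
            revert this; decide) 3 (Subgroup.mem_zpowers _)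
      exact hg this
    let := IsPGroup.commGroupOfCardEqPrimeSq (p := 3) (G := G) h
    exact iso_of_exponent 3 _ (by rw [h]; simp) hexp

theorem factor_of {V : Type} [AddCommGroup V] [Finite V] (A B E : Set V)
    (hcard : A.ncard * B.ncard = Nat.card V)
    (hB : ∀ b ∈ B, ∀ b' ∈ B, b = b' ∨ b' - b ∈ E ∨ b - b' ∈ E)
    (hA : ∀ a ∈ A, ∀ a' ∈ A, a - a' ∉ E) : IsFactor (G := Multiplicative V) A := by
  left
  have aux : ∀ a b a' b' : V, a + b = a' + b' → b' - b ∈ E → a - a' ∈ E := by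
    intro a b a' b' hab h
    have : a - a' = b' - b := by rw [sub_eq_sub_iff_add_eq_add, hab, add_comm]
    rwa [this]
  refine ⟨B, isDirectProd_iff.2 ?_⟩
  apply Function.Injective.bijective_of_nat_card_le
  · rintro ⟨⟨a, ha⟩, ⟨b, hb⟩⟩ ⟨⟨a', ha'⟩, ⟨b', hb'⟩⟩ hab
    have hab2 : @HAdd.hAdd V V V _ a b = @HAdd.hAdd V V V _ a' b' := hab
    have hb1 : b = b' := by
      rcases hB b hb b' hb' with h | h | h
      · exact h
      · exact absurd (aux _ _ _ _ hab2 h) (hA a ha a' ha')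
      · exact absurd (aux _ _ _ _ hab2.symm h) (hA a' ha' a ha)
    subst hb1
    have ha1 : a = a' := add_right_cancel (G := V) hab
    subst ha1
    rfl
  · rw [Nat.card_prod]
    exact hcard.ge

theorem strong_of_equiv {G G' : Type*} [Group G] [Group G'] (e : G ≃* G') (h : HasStrongCFS G') :
    HasStrongCFS G := by
  have key : ∀ (A : Set G) (B : Set G'), IsDirectProd (e '' A) B → IsDirectProd A (e ⁻¹' B) := by
    intro A B hAB g
    obtain ⟨_, ⟨a, ha, rfl⟩, b, hb, hab⟩ := hAB.surj (e g)
    refine ⟨(a, e.symm b), ⟨ha, by simpa, e.injective (by simpa)⟩, ?_⟩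
    rintro ⟨a', b'⟩ ⟨ha', hb', hab'⟩
    have := hAB.inj ⟨a, ha, rfl⟩ ⟨a', ha', rfl⟩ hb hb' (by rw [hab, ← hab', map_mul])
    simp [e.injective this.1, this.2]
  have key' : ∀ (A : Set G) (B : Set G'), IsDirectProd B (e '' A) → IsDirectProd (e ⁻¹' B) A := by
    intro A B hAB g
    obtain ⟨b, hb, _, ⟨a, ha, rfl⟩, hab⟩ := hAB.surj (e g)
    refine ⟨(e.symm b, a), ⟨by simpa, ha, e.injective (by simpa)⟩, ?_⟩
    rintro ⟨b', a'⟩ ⟨hb', ha', hab'⟩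
    have := hAB.inj hb hb' ⟨a, ha, rfl⟩ ⟨a', ha', rfl⟩ (by rw [hab, ← hab', map_mul])
    simp [e.injective this.2, this.1]
  intro A hA
  rcases h (e '' A) (by
    rwa [Nat.card_image_of_injective e.injective, ← Nat.card_congr e.toEquiv]) with ⟨B, hB⟩ | ⟨B, hB⟩
  · exact .inl ⟨_, key _ _ hB⟩
  · exact .inr ⟨_, key' _ _ hB⟩

theorem factor_one {G : Type*} [Group G] (A : Set G) (h : Nat.card A = 1) : IsFactor A := by
  obtain ⟨a, rfl⟩ := Set.ncard_eq_one.1 h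
  left
  refine ⟨Set.univ, fun g => ⟨(a, a⁻¹ * g), by simp, ?_⟩⟩
  rintro ⟨a', b'⟩ ⟨ha, -, hb⟩
  simp only [Set.mem_singleton_iff] at ha hb
  simp [ha, ← hb]

theorem factor_top {G : Type*} [Group G] [Finite G] (A : Set G) (h : Nat.card A = Nat.card G) :
    IsFactor A := by
  have : A = Set.univ := by
    apply Set.eq_of_subset_of_ncard_le (Set.subset_univ _)
    rw [Set.ncard_univ]; exact h.ge
  subst this
  left
  refine ⟨{1}, fun g => ⟨(g, 1), by simp, ?_⟩⟩
  rintro ⟨a', b'⟩ ⟨-, hb, hab⟩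
  simp only [Set.mem_singleton_iff] at hb hab
  simp [hb, ← hab]

abbrev V4 := ZMod 2 × ZMod 2
abbrev V8 := ZMod 2 × ZMod 2 × ZMod 2
abbrev V9 := ZMod 3 × ZMod 3

theorem dec4 : ∀ u : V4, ∃ e, 0 ≠ e ∧ u ≠ e ∧ -u ≠ e := by decide
theorem decC4 : ∀ u : ZMod 4, ∃ e, 0 ≠ e ∧ u ≠ e ∧ -u ≠ e := by decide
theorem dec8a : ∀ u : V8, ∃ e f, 0 ≠ e ∧ 0 ≠ f ∧ e ≠ f ∧ u ≠ e ∧ u ≠ f ∧ u ≠ e + f := by decide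
theorem dec8neg : ∀ u : V8, -u = u := by decide
set_option maxRecDepth 100000 in
theorem dec8b : ∀ u v w : V8, ∃ e : V8, ∀ x ∈ ({0, u, v, w} : Finset V8), ∀ y ∈ ({0, u, v, w} : Finset V8), x - y ≠ e := by decide
set_option maxRecDepth 100000 in
theorem dec9 : ∀ u v : V9, ∃ e : V9, ∀ x ∈ ({0, u, v} : Finset V9), ∀ y ∈ ({0, u, v} : Finset V9), x - y ≠ e := by decide
theorem dec9e : ∀ e : V9, e ≠ 0 → -e ≠ e := by decide
theorem dec9d : ∀ e : V9, -e - e = e := by decide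

theorem factor_pair {V : Type} [AddCommGroup V] [Finite V]
    (hdec : ∀ u : V, ∃ e, 0 ≠ e ∧ u ≠ e ∧ -u ≠ e) (h4 : Nat.card V = 4)
    (A : Set V) (h : A.ncard = 2) : IsFactor (G := Multiplicative V) A := by
  obtain ⟨a, b, hab, rfl⟩ := Set.ncard_eq_two.1 h
  obtain ⟨e, he0, he1, he2⟩ := hdec (a - b)
  rw [neg_sub] at he2
  refine factor_of _ {0, e} {e} (by rw [h, Set.ncard_pair he0, h4]) ?_ ?_
  · rintro _ (rfl | rfl) _ (rfl | rfl) <;> simp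
  · rintro _ (rfl | rfl) _ (rfl | rfl) <;> simp [*]

theorem strong_four {V : Type} [AddCommGroup V] [Finite V]
    (hdec : ∀ u : V, ∃ e, 0 ≠ e ∧ u ≠ e ∧ -u ≠ e) (h4 : Nat.card V = 4) :
    HasStrongCFS (Multiplicative V) := by
  intro A hA
  have hc : Nat.card (Multiplicative V) = 2 ^ 2 := h4
  rw [hc, Nat.dvd_prime_pow Nat.prime_two] at hA
  obtain ⟨k, hk, hA⟩ := hA
  interval_cases k
  · exact factor_one A hA
  · exact factor_pair hdec h4 A hA
  · exact factor_top A (hA.trans hc.symm)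

theorem strong_eight : HasStrongCFS (Multiplicative V8) := by
  intro A hA
  have hc : Nat.card (Multiplicative V8) = 2 ^ 3 := by
    change Nat.card V8 = _
    simp
  rw [hc, Nat.dvd_prime_pow Nat.prime_two] at hA
  obtain ⟨k, hk, hA⟩ := hA
  interval_cases k
  · exact factor_one A hA
  · change Set V8 at A
    change A.ncard = 2 at hA
    obtain ⟨a, b, hab, rfl⟩ := Set.ncard_eq_two.1 hA
    obtain ⟨e, f, he, hf, hef, h1, h2, h3⟩ := dec8a (a - b)
    have hs : b - a = a - b := by rw [← dec8neg (a - b), neg_sub]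
    have hee : e + e = 0 := by nth_rw 1 [← dec8neg e]; simp
    have hff : f + f = 0 := by nth_rw 1 [← dec8neg f]; simp
    have hef0 : 0 ≠ e + f := by
      intro h
      apply hef
      rw [← dec8neg f]; exact eq_neg_of_add_eq_zero_left h.symm
    refine factor_of _ {0, e, f, e + f} {e, f, e + f} ?_ ?_ ?_
    · have : ({0, e, f, e + f} : Set V8).ncard = 4 := by
        rw [Set.ncard_insert_of_notMem (by simp [he, hf, hef0]),
          Set.ncard_insert_of_notMem (by simp [hef, hf.symm]), Set.ncard_pair (by simp [he.symm])]
      rw [hA, this]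
      simp
    · have hfe : f - e = e + f := by rw [sub_eq_add_neg, dec8neg, add_comm]
      have hfe' : e - f = e + f := by rw [sub_eq_add_neg, dec8neg]
      rintro _ (rfl | rfl | rfl | rfl) _ (rfl | rfl | rfl | rfl) <;> simp [hfe, hfe']
    · rintro _ (rfl | rfl) _ (rfl | rfl) <;> simp [*]
  · change Set V8 at A
    change A.ncard = 4 at hA
    have hA' := hA
    obtain ⟨a, t, hat, rfl, ht⟩ := (Set.ncard_eq_succ (n := 3)).1 hA'
    obtain ⟨b, c, d, -, -, -, rfl⟩ := Set.ncard_eq_three.1 ht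
    obtain ⟨e, he⟩ := dec8b (b - a) (c - a) (d - a)
    have he0 : 0 ≠ e := by simpa using he 0 (by simp) 0 (by simp)
    refine factor_of _ {0, e} {e} (by rw [hA, Set.ncard_pair he0]; simp) ?_ ?_
    · rintro _ (rfl | rfl) _ (rfl | rfl) <;> simp
    · intro x hx y hy
      have := he (x - a) (by rcases hx with rfl | rfl | rfl | rfl <;> simp)
        (y - a) (by rcases hy with rfl | rfl | rfl | rfl <;> simp)
      rw [sub_sub_sub_cancel_right] at this
      exact this
  · exact factor_top A (hA.trans hc.symm)

theorem strong_nine : HasStrongCFS (Multiplicative V9) := by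
  intro A hA
  have hc : Nat.card (Multiplicative V9) = 3 ^ 2 := by
    change Nat.card V9 = _
    simp
  rw [hc, Nat.dvd_prime_pow Nat.prime_three] at hA
  obtain ⟨k, hk, hA⟩ := hA
  interval_cases k
  · exact factor_one A hA
  · change Set V9 at A
    change A.ncard = 3 at hA
    obtain ⟨a, b, c, -, -, -, rfl⟩ := Set.ncard_eq_three.1 hA
    obtain ⟨e, he⟩ := dec9 (b - a) (c - a)
    have he0 : 0 ≠ e := by simpa using he 0 (by simp) 0 (by simp)
    have hne := dec9e e he0.symm
    refine factor_of _ {0, e, -e} {e} ?_ ?_ ?_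
    · rw [hA, Set.ncard_eq_three.2 ⟨0, e, -e, he0, ?_, hne.symm, rfl⟩]
      · simp
      · simpa [eq_comm] using he0
    · rintro _ (rfl | rfl | rfl) _ (rfl | rfl | rfl) <;> simp [dec9d]
    · intro x hx y hy
      have := he (x - a) (by rcases hx with rfl | rfl | rfl <;> simp)
        (y - a) (by rcases hy with rfl | rfl | rfl <;> simp)
      rw [sub_sub_sub_cancel_right] at this
      exact this
  · exact factor_top A (hA.trans hc.symm)

/-- A finite group `G` has the strong CFS property if and only if `G` is the trivial
group, a cyclic group of prime order, `C2 × C2`, `C4`, `C2 × C2 × C2`, or `C3 × C3`. -/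
theorem stmt_8 {G : Type*} [Group G] [Finite G] :
    HasStrongCFS G ↔
      (Nat.card G = 1 ∨
       (IsCyclic G ∧ (Nat.card G).Prime) ∨
       Nonempty (G ≃* Multiplicative (ZMod 2 × ZMod 2)) ∨
       Nonempty (G ≃* Multiplicative (ZMod 4)) ∨
       Nonempty (G ≃* Multiplicative (ZMod 2 × ZMod 2 × ZMod 2)) ∨
       Nonempty (G ≃* Multiplicative (ZMod 3 × ZMod 3))) := by
  constructor
  · exact cfs_forward
  · rintro (h | ⟨-, h⟩ | ⟨⟨e⟩⟩ | ⟨⟨e⟩⟩ | ⟨⟨e⟩⟩ | ⟨⟨e⟩⟩)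
    · intro A hA
      rw [h, Nat.dvd_one] at hA
      exact factor_one A hA
    · intro A hA
      rcases (Nat.dvd_prime h).1 hA with h' | h'
      · exact factor_one A h'
      · exact factor_top A h'
    · exact strong_of_equiv e (strong_four dec4 (by simp))
    · exact strong_of_equiv e (strong_four decC4 (by simp))
    · exact strong_of_equiv e strong_eight
    · exact strong_of_equiv e strong_nine
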